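/- arXiv:1410.0645 — 2 statements merged into one kernel-verified Lean document; each statement's English description precedes it below -/
import Mathlib

section
/- Let a₁, a₂ : ℝ² → ℂ be smooth and let X₀, X₁, X₂, X₃ : ℝ² → M₂(ℂ) be smooth matrix-valued functions satisfying, at every point of ℝ²: (i) X₁_t − X₀_x + [X₁,X₀] = 0; (ii) X₃_t + i(a₁X₃)_xx − i(a₁[X₁,X₃])_x − i[X₁,(a₁X₃)_x] + i a₁[X₁,[X₁,X₃]] + [X₃,X₀] = 0; (iii) X₂_t − i(a₁X₂)_xx + i(a₁[X₁,X₂])_x + i[X₁,(a₁X₂)_x] − i a₁[X₁,[X₁,X₂]] + [X₂,X₀] = 0; (iv) −(a₁[X₂,X₃])_x + a₁[X₁,[X₂,X₃]] − [X₂,(a₁X₃)_x] + a₁[X₂,[X₁,X₃]] + [X₃,(a₁X₂)_x] − a₁[X₃,[X₁,X₂]] = 0; (v) −[X₃,(a₁X₃)_x] + a₁[X₃,[X₁,X₃]] = 0; (vi) [X₂,(a₁X₂)_x] − a₁[X₂,[X₁,X₂]] = 0; (vii) (a₂X₂)_x − a₂[X₁,X₂] + i a₁[X₂,[X₂,X₃]]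 = 0; (viii) (a₂X₃)_x − a₂[X₁,X₃] + i a₁[X₃,[X₂,X₃]] = 0. Then for every smooth solution q, r : ℝ² → ℂ of the vcDNLS system i q_t + a₁ q_xx + 2 i a₂ q r q_x + i a₂ q² r_x = 0, −i r_t + a₁ r_xx − 2 i a₂ q r r_x − i a₂ r² q_x = 0, the matrices F = X₁ + r X₂ + q X₃ and G = i a₁ (q_x X₃ − r_x X₂) + i(a₁X₂)_x r − i(a₁X₃)_x q − i a₁ r [X₁,X₂] + i a₁ q [X₁,X₃] + i a₁ r q [X₂,X₃] − a₂ r² q X₂ − a₂ q² r X₃ + X₀ satisfy the zero-curvature condition F_t − G_x + [F,G] = 0 identically on ℝ². -/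
/-!
Absorb the background `X₀`, `X₁` into covariant derivatives `∇ₓ = ∂ₓ - [X₁, ·]` and
`∇ₜ = ∂ₜ - [X₀, ·]`, and write `W(c, Y) = c ∇ₓY - cₓ Y`. Then `F = X₁ + U` and `G = X₀ + V` with
`U = r X₂ + q X₃` and
`V = i (W(r, a₁X₂) - W(q, a₁X₃) + r q a₁ [X₂, X₃]) - r q a₂ U`,
and the curvature is `X₁ₜ - X₀ₓ + [X₁, X₀] + ∇ₜU - ∇ₓV + [U, V]`. Constraints (ii)-(viii) become
`∇ₜX₃ + i ∇ₓ²(a₁X₃) = 0`, `∇ₜX₂ - i ∇ₓ²(a₁X₂) = 0`,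
`[X₃, ∇ₓ(a₁X₂)] - [X₂, ∇ₓ(a₁X₃)] - ∇ₓ(a₁[X₂, X₃]) = 0`, `[X₃, ∇ₓ(a₁X₃)] = 0`,
`[X₂, ∇ₓ(a₁X₂)] = 0` and `∇ₓ(a₂Xⱼ) + i a₁ [Xⱼ, [X₂, X₃]] = 0` for `j = 2, 3`: they are the
coefficients of `q`, `r`, `r q`, `q²`, `r²`, `r² q`, `q² r` in the curvature. What is left is
`X₃` and `X₂` times the two vcDNLS equations in divergence form,
`qₜ - i a₁ qₓₓ + a₂ (q² r)ₓ = 0` and `rₜ + i a₁ rₓₓ + a₂ (r² q)ₓ = 0`.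
-/

open Complex

attribute [local instance] Matrix.normedAddCommGroup Matrix.normedSpace

/-- Partial derivative in the first (spatial) variable. -/
noncomputable def Dx {E : Type*} [NormedAddCommGroup E] [NormedSpace ℝ E]
    (F : ℝ × ℝ → E) : ℝ × ℝ → E := fun p => fderiv ℝ F p (1, 0)

/-- Partial derivative in the second (temporal) variable. -/
noncomputable def Dt {E : Type*} [NormedAddCommGroup E] [NormedSpace ℝ E]
    (F : ℝ × ℝ → E) : ℝ × ℝ → E := fun p => fderiv ℝ F p (0, 1)

/-- The matrix commutator `[A,B] = AB - BA`. -/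
noncomputable def matComm (A B : Matrix (Fin 2) (Fin 2) ℂ) : Matrix (Fin 2) (Fin 2) ℂ :=
  A * B - B * A

theorem bracket_swap {E : Type*} [NormedAddCommGroup E] [NormedSpace ℂ E]
    {B : E →L[ℂ] E →L[ℂ] E} (hB : ∀ x, B x x = 0) (x y : E) : B x y = -B y x :=
  (LinearMap.IsAlt.neg (B := B.toLinearMap₁₂) hB y x).symm

section CovariantDerivative

variable {P E : Type*} [NormedAddCommGroup P] [NormedSpace ℝ P]
  [NormedAddCommGroup E] [NormedSpace ℝ E]

/-- The directional derivative `∂ᵥ f`, taken from the Fréchet derivative: `Dx` and `Dt` are the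
cases `v = (1, 0)` and `v = (0, 1)`. -/
noncomputable def dirDeriv (v : P) (f : P → E) : P → E := fun p => fderiv ℝ f p v

theorem differentiable_dirDeriv (v : P) {f : P → E} (hf : ContDiff ℝ 2 f) :
    Differentiable ℝ (dirDeriv v f) :=
  ((hf.fderiv_right (m := 1) (by norm_num)).differentiable one_ne_zero).clm_apply
    (differentiable_const v)

theorem dirDeriv_mul (v : P) {f g : P → ℂ} {p : P} (hf : DifferentiableAt ℝ f p)
    (hg : DifferentiableAt ℝ g p) :
    dirDeriv v (f * g) p = f p * dirDeriv v g p + g p * dirDeriv v f p := by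
  simp [dirDeriv, fderiv_mul hf hg]

theorem dirDeriv_sq_mul (v : P) {f g : P → ℂ} {p : P} (hf : DifferentiableAt ℝ f p)
    (hg : DifferentiableAt ℝ g p) :
    dirDeriv v (f ^ 2 * g) p = 2 * f p * g p * dirDeriv v f p + f p ^ 2 * dirDeriv v g p := by
  rw [sq, dirDeriv_mul v (hf.mul hf) hg, dirDeriv_mul v hf hf, Pi.mul_apply]
  ring

variable [NormedSpace ℂ E]

/-- The covariant derivative `∇ᵥ Y = ∂ᵥ Y - [A, Y]` along `v`, where `A` is the component of the
connection along `v` and the bracket is a continuous bilinear map `B`. -/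
noncomputable def covDeriv (B : E →L[ℂ] E →L[ℂ] E) (v : P) (A Y : P → E) : P → E :=
  fun p => dirDeriv v Y p - B (A p) (Y p)

/-- The curvature `∂_w F - ∂ᵥ G + [F, G]` of the connection with components `F` along `v` and
`G` along `w`. -/
noncomputable def curvature (B : E →L[ℂ] E →L[ℂ] E) (v w : P) (F G : P → E) : P → E :=
  fun p => dirDeriv w F p - dirDeriv v G p + B (F p) (G p)

/-- The covariant Wronskian `W(c, Y) = c ∇ᵥ Y - (∂ᵥ c) Y` of a scalar function and a vector
function. -/
noncomputable def covWronskian (B : E →L[ℂ] E →L[ℂ] E) (v : P) (A : P → E) (c : P → ℂ)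
    (Y : P → E) : P → E :=
  c • covDeriv B v A Y - dirDeriv v c • Y

theorem curvature_add {B : E →L[ℂ] E →L[ℂ] E} (hB : ∀ x, B x x = 0) (v w : P)
    {A₁ A₀ U V : P → E} {p : P} (hA₁ : DifferentiableAt ℝ A₁ p) (hA₀ : DifferentiableAt ℝ A₀ p)
    (hU : DifferentiableAt ℝ U p) (hV : DifferentiableAt ℝ V p) :
    curvature B v w (A₁ + U) (A₀ + V) p =
      curvature B v w A₁ A₀ p + (covDeriv B w A₀ U p - covDeriv B v A₁ V p)
        + B (U p) (V p) := by
  simp only [curvature, covDeriv, dirDeriv, fderiv_add hA₁ hU, fderiv_add hA₀ hV, Pi.add_apply,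
    add_apply, map_add, bracket_swap hB (A₀ p) (U p)]
  abel

variable (B : E →L[ℂ] E →L[ℂ] E) (v : P) {A Y Z : P → E} {c : P → ℂ} {p : P}

theorem covDeriv_add (hY : DifferentiableAt ℝ Y p) (hZ : DifferentiableAt ℝ Z p) :
    covDeriv B v A (Y + Z) p = covDeriv B v A Y p + covDeriv B v A Z p := by
  simp only [covDeriv, dirDeriv, fderiv_add hY hZ, Pi.add_apply, add_apply,
    map_add]
  abel

theorem covDeriv_sub (hY : DifferentiableAt ℝ Y p) (hZ : DifferentiableAt ℝ Z p) :
    covDeriv B v A (Y - Z) p = covDeriv B v A Y p - covDeriv B v A Z p := by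
  simp only [covDeriv, dirDeriv, fderiv_sub hY hZ, Pi.sub_apply, sub_apply,
    map_sub]
  abel

variable [IsScalarTower ℝ ℂ E]

theorem covDeriv_smul (hc : DifferentiableAt ℝ c p) (hY : DifferentiableAt ℝ Y p) :
    covDeriv B v A (c • Y) p = c p • covDeriv B v A Y p + dirDeriv v c p • Y p := by
  simp only [covDeriv, dirDeriv, fderiv_smul hc hY, Pi.smul_apply',
    add_apply, smul_apply,
    ContinuousLinearMap.smulRight_apply, map_smul]
  module

theorem covDeriv_const_smul (k : ℂ) (hY : DifferentiableAt ℝ Y p) :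
    covDeriv B v A (k • Y) p = k • covDeriv B v A Y p := by
  simp only [covDeriv, dirDeriv, fderiv_const_smul hY, Pi.smul_apply,
    smul_apply, map_smul, smul_sub]

theorem differentiable_bracket (hY : Differentiable ℝ Y) (hZ : Differentiable ℝ Z) :
    Differentiable ℝ (fun p => B (Y p) (Z p)) := fun p =>
  DifferentiableAt.comp (g := fun x : E × E => B x.1 x.2) p
    ((B.isBoundedBilinearMap.differentiableAt _).restrictScalars ℝ) ((hY p).prodMk (hZ p))

theorem differentiable_covDeriv (hA : Differentiable ℝ A) (hY : ContDiff ℝ 2 Y) :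
    Differentiable ℝ (covDeriv B v A Y) :=
  (differentiable_dirDeriv v hY).sub
    (differentiable_bracket B hA (hY.differentiable two_ne_zero))

theorem differentiable_covWronskian (hA : Differentiable ℝ A) (hc : ContDiff ℝ 2 c)
    (hY : ContDiff ℝ 2 Y) : Differentiable ℝ (covWronskian B v A c Y) :=
  ((hc.differentiable two_ne_zero).smul (differentiable_covDeriv B v hA hY)).sub
    ((differentiable_dirDeriv v hc).smul (hY.differentiable two_ne_zero))

theorem covDeriv_covDeriv_smul (hA : Differentiable ℝ A) (hc : ContDiff ℝ 2 c)
    (hY : ContDiff ℝ 2 Y) (p : P) :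
    covDeriv B v A (covDeriv B v A (c • Y)) p =
      dirDeriv v (dirDeriv v (c • Y)) p - dirDeriv v (c • fun p => B (A p) (Y p)) p
        - B (A p) (dirDeriv v (c • Y) p) + c p • B (A p) (B (A p) (Y p)) := by
  have hcAY : Differentiable ℝ (c • fun p => B (A p) (Y p)) :=
    (hc.differentiable two_ne_zero).smul
      (differentiable_bracket B hA (hY.differentiable two_ne_zero))
  have hcov : covDeriv B v A (c • Y) = dirDeriv v (c • Y) - c • fun p => B (A p) (Y p) := by
    funext p
    simp only [covDeriv, Pi.sub_apply, Pi.smul_apply', map_smul]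
  rw [hcov, covDeriv_sub B v (differentiable_dirDeriv v (hc.smul hY) p) (hcAY p)]
  simp only [covDeriv, Pi.smul_apply', map_smul]
  abel

-- The first-order terms `(∂ᵥ c) ∇ᵥ Y` cancel, as for the classical Wronskian.
theorem covDeriv_covWronskian (hA : Differentiable ℝ A) (hc : ContDiff ℝ 2 c)
    (hY : ContDiff ℝ 2 Y) (p : P) :
    covDeriv B v A (covWronskian B v A c Y) p =
      c p • covDeriv B v A (covDeriv B v A Y) p - dirDeriv v (dirDeriv v c) p • Y p := by
  have hc' := hc.differentiable two_ne_zero p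
  have hY' := hY.differentiable two_ne_zero p
  have hcv := differentiable_dirDeriv v hc p
  have hYv := differentiable_covDeriv B v hA hY p
  rw [covWronskian, covDeriv_sub B v (hc'.smul hYv) (hcv.smul hY'), covDeriv_smul B v hc' hYv,
    covDeriv_smul B v hcv hY']
  abel

end CovariantDerivative

section LaxPair

variable {P E : Type*} [NormedAddCommGroup P] [NormedSpace ℝ P]
  [NormedAddCommGroup E] [NormedSpace ℝ E] [NormedSpace ℂ E]

/-- The part `U = r X₂ + q X₃` of the Lax matrix `F = X₁ + U` that depends on `q` and `r`. -/
def laxPotential (X₂ X₃ : P → E) (q r : P → ℂ) : P → E := r • X₂ + q • X₃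

/-- The part `V` of the Lax matrix `G = X₀ + V` that depends on `q` and `r`, arranged by degree:
`V = i (W(r, a₁X₂) - W(q, a₁X₃) + r q a₁ [X₂, X₃]) - (r² q a₂X₂ + q² r a₂X₃)`. -/
noncomputable def laxFlux (B : E →L[ℂ] E →L[ℂ] E) (v : P) (a₁ a₂ : P → ℂ) (X₁ X₂ X₃ : P → E)
    (q r : P → ℂ) : P → E :=
  I • (covWronskian B v X₁ r (a₁ • X₂) - covWronskian B v X₁ q (a₁ • X₃)
      + (r * q) • a₁ • fun p => B (X₂ p) (X₃ p))
    - ((r ^ 2 * q) • a₂ • X₂ + (q ^ 2 * r) • a₂ • X₃)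

variable {B : E →L[ℂ] E →L[ℂ] E} (v w : P) {a₁ a₂ q r : P → ℂ} {X₀ X₁ X₂ X₃ : P → E}

-- The cubic part of the flux is `-r q a₂ U`, which brackets to zero with the potential `U`.
theorem bracket_laxPotential_laxFlux (hB : ∀ x, B x x = 0) {p : P}
    (hq : DifferentiableAt ℝ q p) (hr : DifferentiableAt ℝ r p) :
    B (laxPotential X₂ X₃ q r p) (laxFlux B v a₁ a₂ X₁ X₂ X₃ q r p) =
      I • (r p ^ 2 • B (X₂ p) (covDeriv B v X₁ (a₁ • X₂) p)
          - q p ^ 2 • B (X₃ p) (covDeriv B v X₁ (a₁ • X₃) p)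
          + (r p * q p) • (B (X₃ p) (covDeriv B v X₁ (a₁ • X₂) p)
            - B (X₂ p) (covDeriv B v X₁ (a₁ • X₃) p))
          + dirDeriv v (r * q) p • a₁ p • B (X₂ p) (X₃ p))
        + (I * a₁ p) • ((r p ^ 2 * q p) • B (X₂ p) (B (X₂ p) (X₃ p))
          + (q p ^ 2 * r p) • B (X₃ p) (B (X₂ p) (X₃ p))) := by
  simp only [laxPotential, laxFlux, covWronskian, dirDeriv_mul v hr hq, Pi.add_apply,
    Pi.sub_apply, Pi.smul_apply, Pi.smul_apply', Pi.mul_apply, Pi.pow_apply, map_add, map_sub,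
    map_smul, add_apply, smul_apply, hB,
    bracket_swap hB (X₃ p) (X₂ p)]
  module

variable [IsScalarTower ℝ ℂ E]

theorem covDeriv_laxPotential {p : P} (hX₂ : DifferentiableAt ℝ X₂ p)
    (hX₃ : DifferentiableAt ℝ X₃ p) (hq : DifferentiableAt ℝ q p)
    (hr : DifferentiableAt ℝ r p) :
    covDeriv B w X₀ (laxPotential X₂ X₃ q r) p =
      r p • covDeriv B w X₀ X₂ p + dirDeriv w r p • X₂ p
        + (q p • covDeriv B w X₀ X₃ p + dirDeriv w q p • X₃ p) := by
  rw [laxPotential, covDeriv_add B w (hr.smul hX₂) (hq.smul hX₃), covDeriv_smul B w hr hX₂,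
    covDeriv_smul B w hq hX₃]

theorem differentiable_laxFlux (ha₁ : ContDiff ℝ 2 a₁) (ha₂ : Differentiable ℝ a₂)
    (hX₁ : Differentiable ℝ X₁) (hX₂ : ContDiff ℝ 2 X₂) (hX₃ : ContDiff ℝ 2 X₃)
    (hq : ContDiff ℝ 2 q) (hr : ContDiff ℝ 2 r) :
    Differentiable ℝ (laxFlux B v a₁ a₂ X₁ X₂ X₃ q r) := by
  have hWr := differentiable_covWronskian B v hX₁ hr (ha₁.smul hX₂)
  have hWq := differentiable_covWronskian B v hX₁ hq (ha₁.smul hX₃)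
  replace ha₁ := ha₁.differentiable two_ne_zero
  replace hX₂ := hX₂.differentiable two_ne_zero
  replace hX₃ := hX₃.differentiable two_ne_zero
  replace hq := hq.differentiable two_ne_zero
  replace hr := hr.differentiable two_ne_zero
  have hX₂₃ := differentiable_bracket B hX₂ hX₃
  exact (((hWr.sub hWq).add ((hr.mul hq).smul (ha₁.smul hX₂₃))).const_smul I).sub
    ((((hr.pow 2).mul hq).smul (ha₂.smul hX₂)).add (((hq.pow 2).mul hr).smul (ha₂.smul hX₃)))

theorem covDeriv_laxFlux (ha₁ : ContDiff ℝ 2 a₁) (ha₂ : Differentiable ℝ a₂)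
    (hX₁ : Differentiable ℝ X₁) (hX₂ : ContDiff ℝ 2 X₂) (hX₃ : ContDiff ℝ 2 X₃)
    (hq : ContDiff ℝ 2 q) (hr : ContDiff ℝ 2 r) (p : P) :
    covDeriv B v X₁ (laxFlux B v a₁ a₂ X₁ X₂ X₃ q r) p =
      I • (r p • covDeriv B v X₁ (covDeriv B v X₁ (a₁ • X₂)) p
          - dirDeriv v (dirDeriv v r) p • a₁ p • X₂ p
          - (q p • covDeriv B v X₁ (covDeriv B v X₁ (a₁ • X₃)) p
            - dirDeriv v (dirDeriv v q) p • a₁ p • X₃ p)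
          + ((r p * q p) • covDeriv B v X₁ (a₁ • fun p => B (X₂ p) (X₃ p)) p
            + dirDeriv v (r * q) p • a₁ p • B (X₂ p) (X₃ p)))
        - ((r p ^ 2 * q p) • covDeriv B v X₁ (a₂ • X₂) p
            + dirDeriv v (r ^ 2 * q) p • a₂ p • X₂ p
          + ((q p ^ 2 * r p) • covDeriv B v X₁ (a₂ • X₃) p
            + dirDeriv v (q ^ 2 * r) p • a₂ p • X₃ p)) := by
  have hWr := differentiable_covWronskian B v hX₁ hr (ha₁.smul hX₂) p
  have hWq := differentiable_covWronskian B v hX₁ hq (ha₁.smul hX₃) p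
  have hX₂' := hX₂.differentiable two_ne_zero
  have hX₃' := hX₃.differentiable two_ne_zero
  have hq' := hq.differentiable two_ne_zero p
  have hr' := hr.differentiable two_ne_zero p
  have ha₁X₂₃ := (ha₁.differentiable two_ne_zero p).smul (differentiable_bracket B hX₂' hX₃' p)
  have ha₂X₂ := (ha₂ p).smul (hX₂' p)
  have ha₂X₃ := (ha₂ p).smul (hX₃' p)
  have hrq := hr'.mul hq'
  have hrrq := (hr'.pow 2).mul hq'
  have hqqr := (hq'.pow 2).mul hr'
  have hquad := (hWr.sub hWq).add (hrq.smul ha₁X₂₃)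
  rw [laxFlux, covDeriv_sub B v (hquad.const_smul I) ((hrrq.smul ha₂X₂).add (hqqr.smul ha₂X₃)),
    covDeriv_const_smul B v I hquad, covDeriv_add B v (hWr.sub hWq) (hrq.smul ha₁X₂₃),
    covDeriv_sub B v hWr hWq, covDeriv_add B v (hrrq.smul ha₂X₂) (hqqr.smul ha₂X₃),
    covDeriv_covWronskian B v hX₁ hr (ha₁.smul hX₂),
    covDeriv_covWronskian B v hX₁ hq (ha₁.smul hX₃),
    covDeriv_smul B v hrq ha₁X₂₃, covDeriv_smul B v hrrq ha₂X₂, covDeriv_smul B v hqqr ha₂X₃]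
  rfl

theorem curvature_laxPair (hB : ∀ x, B x x = 0) (ha₁ : ContDiff ℝ 2 a₁)
    (ha₂ : Differentiable ℝ a₂) (hX₀ : Differentiable ℝ X₀) (hX₁ : Differentiable ℝ X₁)
    (hX₂ : ContDiff ℝ 2 X₂) (hX₃ : ContDiff ℝ 2 X₃) (hq : ContDiff ℝ 2 q) (hr : ContDiff ℝ 2 r)
    (p : P) :
    curvature B v w (X₁ + laxPotential X₂ X₃ q r) (X₀ + laxFlux B v a₁ a₂ X₁ X₂ X₃ q r) p =
      curvature B v w X₁ X₀ p
        + q p • (covDeriv B w X₀ X₃ p + I • covDeriv B v X₁ (covDeriv B v X₁ (a₁ • X₃)) p)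
        + r p • (covDeriv B w X₀ X₂ p - I • covDeriv B v X₁ (covDeriv B v X₁ (a₁ • X₂)) p)
        + (I * (r p * q p)) • (B (X₃ p) (covDeriv B v X₁ (a₁ • X₂) p)
          - B (X₂ p) (covDeriv B v X₁ (a₁ • X₃) p)
          - covDeriv B v X₁ (a₁ • fun p => B (X₂ p) (X₃ p)) p)
        - (I * q p ^ 2) • B (X₃ p) (covDeriv B v X₁ (a₁ • X₃) p)
        + (I * r p ^ 2) • B (X₂ p) (covDeriv B v X₁ (a₁ • X₂) p)
        + (r p ^ 2 * q p) • (covDeriv B v X₁ (a₂ • X₂) p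
          + (I * a₁ p) • B (X₂ p) (B (X₂ p) (X₃ p)))
        + (q p ^ 2 * r p) • (covDeriv B v X₁ (a₂ • X₃) p
          + (I * a₁ p) • B (X₃ p) (B (X₂ p) (X₃ p)))
        + (dirDeriv w q p - I * a₁ p * dirDeriv v (dirDeriv v q) p
          + a₂ p * dirDeriv v (q ^ 2 * r) p) • X₃ p
        + (dirDeriv w r p + I * a₁ p * dirDeriv v (dirDeriv v r) p
          + a₂ p * dirDeriv v (r ^ 2 * q) p) • X₂ p := by
  have hX₂' := hX₂.differentiable two_ne_zero p
  have hX₃' := hX₃.differentiable two_ne_zero p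
  have hq' := hq.differentiable two_ne_zero p
  have hr' := hr.differentiable two_ne_zero p
  have hU : DifferentiableAt ℝ (laxPotential X₂ X₃ q r) p := (hr'.smul hX₂').add (hq'.smul hX₃')
  have hV := differentiable_laxFlux (B := B) v ha₁ ha₂ hX₁ hX₂ hX₃ hq hr p
  rw [curvature_add hB v w (hX₁ p) (hX₀ p) hU hV, covDeriv_laxPotential w hX₂' hX₃' hq' hr',
    covDeriv_laxFlux v ha₁ ha₂ hX₁ hX₂ hX₃ hq hr, bracket_laxPotential_laxFlux v hB hq' hr']
  module

theorem vcDNLS_zero_curvature_general (hB : ∀ x, B x x = 0)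
    (ha₁ : ContDiff ℝ 2 a₁) (ha₂ : Differentiable ℝ a₂) (hX₀ : Differentiable ℝ X₀)
    (hX₁ : Differentiable ℝ X₁) (hX₂ : ContDiff ℝ 2 X₂) (hX₃ : ContDiff ℝ 2 X₃)
    (h1 : ∀ p, dirDeriv w X₁ p - dirDeriv v X₀ p + B (X₁ p) (X₀ p) = 0)
    (h2 : ∀ p, dirDeriv w X₃ p + I • dirDeriv v (dirDeriv v (a₁ • X₃)) p
        - I • dirDeriv v (a₁ • fun p => B (X₁ p) (X₃ p)) p
        - I • B (X₁ p) (dirDeriv v (a₁ • X₃) p)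
        + (I * a₁ p) • B (X₁ p) (B (X₁ p) (X₃ p)) + B (X₃ p) (X₀ p) = 0)
    (h3 : ∀ p, dirDeriv w X₂ p - I • dirDeriv v (dirDeriv v (a₁ • X₂)) p
        + I • dirDeriv v (a₁ • fun p => B (X₁ p) (X₂ p)) p
        + I • B (X₁ p) (dirDeriv v (a₁ • X₂) p)
        - (I * a₁ p) • B (X₁ p) (B (X₁ p) (X₂ p)) + B (X₂ p) (X₀ p) = 0)
    (h4 : ∀ p, -dirDeriv v (a₁ • fun p => B (X₂ p) (X₃ p)) p
        + a₁ p • B (X₁ p) (B (X₂ p) (X₃ p)) - B (X₂ p) (dirDeriv v (a₁ • X₃) p)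
        + a₁ p • B (X₂ p) (B (X₁ p) (X₃ p)) + B (X₃ p) (dirDeriv v (a₁ • X₂) p)
        - a₁ p • B (X₃ p) (B (X₁ p) (X₂ p)) = 0)
    (h5 : ∀ p, -B (X₃ p) (dirDeriv v (a₁ • X₃) p) + a₁ p • B (X₃ p) (B (X₁ p) (X₃ p)) = 0)
    (h6 : ∀ p, B (X₂ p) (dirDeriv v (a₁ • X₂) p) - a₁ p • B (X₂ p) (B (X₁ p) (X₂ p)) = 0)
    (h7 : ∀ p, dirDeriv v (a₂ • X₂) p - a₂ p • B (X₁ p) (X₂ p)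
        + (I * a₁ p) • B (X₂ p) (B (X₂ p) (X₃ p)) = 0)
    (h8 : ∀ p, dirDeriv v (a₂ • X₃) p - a₂ p • B (X₁ p) (X₃ p)
        + (I * a₁ p) • B (X₃ p) (B (X₂ p) (X₃ p)) = 0)
    (hq : ContDiff ℝ 2 q) (hr : ContDiff ℝ 2 r)
    (heq1 : ∀ p, I * dirDeriv w q p + a₁ p * dirDeriv v (dirDeriv v q) p
        + 2 * I * a₂ p * q p * r p * dirDeriv v q p + I * a₂ p * q p ^ 2 * dirDeriv v r p = 0)
    (heq2 : ∀ p, -I * dirDeriv w r p + a₁ p * dirDeriv v (dirDeriv v r) p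
        - 2 * I * a₂ p * q p * r p * dirDeriv v r p - I * a₂ p * r p ^ 2 * dirDeriv v q p = 0)
    {F G : P → E} (hF : F = fun p => X₁ p + r p • X₂ p + q p • X₃ p)
    (hG : G = fun p => (I * a₁ p) • (dirDeriv v q p • X₃ p - dirDeriv v r p • X₂ p)
        + r p • (I • dirDeriv v (a₁ • X₂) p) - q p • (I • dirDeriv v (a₁ • X₃) p)
        - (I * a₁ p * r p) • B (X₁ p) (X₂ p) + (I * a₁ p * q p) • B (X₁ p) (X₃ p)
        + (I * a₁ p * r p * q p) • B (X₂ p) (X₃ p)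
        - (a₂ p * r p ^ 2 * q p) • X₂ p - (a₂ p * q p ^ 2 * r p) • X₃ p + X₀ p) (p : P) :
    dirDeriv w F p - dirDeriv v G p + B (F p) (G p) = 0 := by
  have hFU : F = X₁ + laxPotential X₂ X₃ q r := by rw [hF, laxPotential, ← add_assoc]; rfl
  have hGV : G = X₀ + laxFlux B v a₁ a₂ X₁ X₂ X₃ q r := by
    funext p
    simp only [hG, laxFlux, covWronskian, covDeriv, Pi.add_apply, Pi.sub_apply, Pi.smul_apply,
      Pi.smul_apply', Pi.mul_apply, Pi.pow_apply, map_smul]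
    module
  have hq' := hq.differentiable two_ne_zero p
  have hr' := hr.differentiable two_ne_zero p
  have hq_div : dirDeriv w q p - I * a₁ p * dirDeriv v (dirDeriv v q) p
      + a₂ p * dirDeriv v (q ^ 2 * r) p = 0 := by
    rw [dirDeriv_sq_mul v hq' hr']
    linear_combination -I * heq1 p + (dirDeriv w q p + 2 * a₂ p * q p * r p * dirDeriv v q p
      + a₂ p * q p ^ 2 * dirDeriv v r p) * I_mul_I
  have hr_div : dirDeriv w r p + I * a₁ p * dirDeriv v (dirDeriv v r) p
      + a₂ p * dirDeriv v (r ^ 2 * q) p = 0 := by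
    rw [dirDeriv_sq_mul v hr' hq']
    linear_combination I * heq2 p + (dirDeriv w r p + 2 * a₂ p * q p * r p * dirDeriv v r p
      + a₂ p * r p ^ 2 * dirDeriv v q p) * I_mul_I
  have hcurv := curvature_laxPair v w hB ha₁ ha₂ hX₀ hX₁ hX₂ hX₃ hq hr p
  rw [← hFU, ← hGV, covDeriv_covDeriv_smul B v hX₁ ha₁ hX₂,
    covDeriv_covDeriv_smul B v hX₁ ha₁ hX₃, hq_div, hr_div] at hcurv
  simp only [curvature, covDeriv, Pi.smul_apply', map_sub, map_smul,
    bracket_swap hB (X₀ p)] at hcurv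
  linear_combination (norm := module) hcurv + h1 p + q p • h2 p + r p • h3 p
    + (I * r p * q p) • h4 p + (I * q p ^ 2) • h5 p + (I * r p ^ 2) • h6 p
    + (r p ^ 2 * q p) • h7 p + (q p ^ 2 * r p) • h8 p

end LaxPair

/-- The commutator of `2 × 2` matrices as a continuous bilinear map, the bracket to which the
general theorem is applied. -/
noncomputable def matCommL : Matrix (Fin 2) (Fin 2) ℂ →L[ℂ] Matrix (Fin 2) (Fin 2) ℂ →L[ℂ]
    Matrix (Fin 2) (Fin 2) ℂ :=
  LinearMap.toContinuousBilinearMap (LinearMap.mul ℂ _ - (LinearMap.mul ℂ _).flip)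

theorem matCommL_apply (A B : Matrix (Fin 2) (Fin 2) ℂ) : matCommL A B = matComm A B := rfl

theorem matCommL_self (A : Matrix (Fin 2) (Fin 2) ℂ) : matCommL A A = 0 := sub_self (A * A)

/-- If the coefficient matrices `X₀, X₁, X₂, X₃` satisfy the eight constraints of the
extended Estabrook-Wahlquist method for the vcDNLS system, then for every smooth
solution `(q, r)` of the vcDNLS system the matrices `F` and `G` form a Lax pair:
the zero-curvature condition `F_t − G_x + [F,G] = 0` holds identically. -/
theorem vcDNLS_zero_curvature (a₁ a₂ : ℝ × ℝ → ℂ)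
    (X₀ X₁ X₂ X₃ : ℝ × ℝ → Matrix (Fin 2) (Fin 2) ℂ)
    (ha₁ : ContDiff ℝ (⊤ : ℕ∞) a₁) (ha₂ : ContDiff ℝ (⊤ : ℕ∞) a₂)
    (hX₀ : ContDiff ℝ (⊤ : ℕ∞) X₀) (hX₁ : ContDiff ℝ (⊤ : ℕ∞) X₁) (hX₂ : ContDiff ℝ (⊤ : ℕ∞) X₂)
    (hX₃ : ContDiff ℝ (⊤ : ℕ∞) X₃)
    (h1 : ∀ p : ℝ × ℝ, Dt X₁ p - Dx X₀ p + matComm (X₁ p) (X₀ p) = 0)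
    (h2 : ∀ p : ℝ × ℝ,
      Dt X₃ p + I • Dx (Dx (fun p' => a₁ p' • X₃ p')) p
        - I • Dx (fun p' => a₁ p' • matComm (X₁ p') (X₃ p')) p
        - I • matComm (X₁ p) (Dx (fun p' => a₁ p' • X₃ p') p)
        + (I * a₁ p) • matComm (X₁ p) (matComm (X₁ p) (X₃ p))
        + matComm (X₃ p) (X₀ p) = 0)
    (h3 : ∀ p : ℝ × ℝ,
      Dt X₂ p - I • Dx (Dx (fun p' => a₁ p' • X₂ p')) p
        + I • Dx (fun p' => a₁ p' • matComm (X₁ p') (X₂ p')) p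
        + I • matComm (X₁ p) (Dx (fun p' => a₁ p' • X₂ p') p)
        - (I * a₁ p) • matComm (X₁ p) (matComm (X₁ p) (X₂ p))
        + matComm (X₂ p) (X₀ p) = 0)
    (h4 : ∀ p : ℝ × ℝ,
      -Dx (fun p' => a₁ p' • matComm (X₂ p') (X₃ p')) p
        + a₁ p • matComm (X₁ p) (matComm (X₂ p) (X₃ p))
        - matComm (X₂ p) (Dx (fun p' => a₁ p' • X₃ p') p)
        + a₁ p • matComm (X₂ p) (matComm (X₁ p) (X₃ p))
        + matComm (X₃ p) (Dx (fun p' => a₁ p' • X₂ p') p)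
        - a₁ p • matComm (X₃ p) (matComm (X₁ p) (X₂ p)) = 0)
    (h5 : ∀ p : ℝ × ℝ,
      -matComm (X₃ p) (Dx (fun p' => a₁ p' • X₃ p') p)
        + a₁ p • matComm (X₃ p) (matComm (X₁ p) (X₃ p)) = 0)
    (h6 : ∀ p : ℝ × ℝ,
      matComm (X₂ p) (Dx (fun p' => a₁ p' • X₂ p') p)
        - a₁ p • matComm (X₂ p) (matComm (X₁ p) (X₂ p)) = 0)
    (h7 : ∀ p : ℝ × ℝ,
      Dx (fun p' => a₂ p' • X₂ p') p - a₂ p • matComm (X₁ p) (X₂ p)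
        + (I * a₁ p) • matComm (X₂ p) (matComm (X₂ p) (X₃ p)) = 0)
    (h8 : ∀ p : ℝ × ℝ,
      Dx (fun p' => a₂ p' • X₃ p') p - a₂ p • matComm (X₁ p) (X₃ p)
        + (I * a₁ p) • matComm (X₃ p) (matComm (X₂ p) (X₃ p)) = 0)
    (q r : ℝ × ℝ → ℂ) (hq : ContDiff ℝ (⊤ : ℕ∞) q) (hr : ContDiff ℝ (⊤ : ℕ∞) r)
    (heq1 : ∀ p : ℝ × ℝ,
      I * Dt q p + a₁ p * Dx (Dx q) p + 2 * I * a₂ p * q p * r p * Dx q p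
        + I * a₂ p * (q p) ^ 2 * Dx r p = 0)
    (heq2 : ∀ p : ℝ × ℝ,
      -I * Dt r p + a₁ p * Dx (Dx r) p - 2 * I * a₂ p * q p * r p * Dx r p
        - I * a₂ p * (r p) ^ 2 * Dx q p = 0)
    (F G : ℝ × ℝ → Matrix (Fin 2) (Fin 2) ℂ)
    (hF : F = fun p => X₁ p + r p • X₂ p + q p • X₃ p)
    (hG : G = fun p =>
      (I * a₁ p) • (Dx q p • X₃ p - Dx r p • X₂ p)
        + r p • (I • Dx (fun p' => a₁ p' • X₂ p') p)
        - q p • (I • Dx (fun p' => a₁ p' • X₃ p') p)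
        - (I * a₁ p * r p) • matComm (X₁ p) (X₂ p)
        + (I * a₁ p * q p) • matComm (X₁ p) (X₃ p)
        + (I * a₁ p * r p * q p) • matComm (X₂ p) (X₃ p)
        - (a₂ p * (r p) ^ 2 * q p) • X₂ p
        - (a₂ p * (q p) ^ 2 * r p) • X₃ p
        + X₀ p) :
    ∀ p : ℝ × ℝ, Dt F p - Dx G p + matComm (F p) (G p) = 0 := by
  have two_le : (2 : WithTop ℕ∞) ≤ (⊤ : ℕ∞) := ENat.LEInfty.out
  simp only [← matCommL_apply] at h1 h2 h3 h4 h5 h6 h7 h8 hG ⊢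
  exact vcDNLS_zero_curvature_general (1, 0) (0, 1) matCommL_self (ha₁.of_le two_le)
    (ha₂.differentiable (by simp)) (hX₀.differentiable (by simp))
    (hX₁.differentiable (by simp)) (hX₂.of_le two_le) (hX₃.of_le two_le) h1 h2 h3 h4 h5 h6
    h7 h8 (hq.of_le two_le) (hr.of_le two_le) heq1 heq2 hF hG
end

section
/- Let f, g, v, γ, f₁, f₇, g₁, g₁₃, p₁, p₂ : ℝ² → ℂ be smooth, with p₁ and p₂ nowhere zero, and set X₀ = [[g₁, 0],[0, g₁₃]], X₁ = [[f₁, 0],[0, f₇]], X₂ = [[0, i p₁],[0, 0]], X₃ = [[0, 0],[−i p₂, 0]]. Then the eight matrix constraints (i) X₁_t − X₀_x + [X₁,X₀] = 0; (ii) X₂_t + i(v+iγ)X₂ + i(fX₂)_xx − i(f[X₁,X₂])_x − i fₓ[X₁,X₂] − i f[X₁,X₂ₓ] + i f[X₁,[X₁,X₂]] + [X₂,X₀] = 0; (iii) X₃_t − i(v−iγ)X₃ − i(fX₃)_xx + i(f[X₁,X₃])_x + i fₓ[X₁,X₃] + i f[X₁,X₃ₓ] − i f[X₁,[X₁,X₃]]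 + [X₃,X₀] = 0; (iv) 2i(f[X₂,X₃])_x − i f[X₁,[X₂,X₃]] + i fₓ[X₂,X₃] − i f[X₂,[X₁,X₃]] + i f[X₃,[X₁,X₂]] = 0; (v) f([X₂,X₂ₓ] − [X₂,[X₁,X₂]]) = 0; (vi) f([X₃,X₃ₓ] − [X₃,[X₁,X₃]]) = 0; (vii) g X₂ − f[X₂,[X₂,X₃]] = 0; (viii) g X₃ + f[X₃,[X₂,X₃]] = 0 all hold at every point of ℝ² if and only if the six scalar equations hold at every point: (KC1) f₁_t − g₁ₓ = 0; (KC2) f₇_t − g₁₃ₓ = 0; (KC3) i p₁_t − i p₁(g₁ − g₁₃ − i v + γ) − (f p₁)_xx + 2(f₁ − f₇)(p₁ f)_x − f p₁(f₁ − f₇)² + f p₁(f₁ − f₇)ₓ = 0; (KC4) i p₂_t + i p₂(g₁ − g₁₃ − i v − γ) + (f p₂)_xx + 2(f₁ − f₇)(f p₂)_x + (f₁ − f₇)² f p₂ + f p₂(f₁ − f₇)ₓ = 0; (KC5) fₓ p₁ p₂ + 2(f p₁ p₂)ₓ = 0; (KC6) g + 2 f p₁ p₂ = 0. -/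
open Complex

attribute [local instance] Matrix.normedAddCommGroup Matrix.normedSpace

/-!
Let `∇X = ∂ₓX - [X₁, X]`. By the Leibniz rule the evolution constraints for `X₂` and `X₃` involve
`X₁` only through `± i ∇²(f Xⱼ)`, by the Jacobi identity the fourth constraint is
`2i ∇(f [X₂, X₃]) + i fₓ [X₂, X₃] = 0`, and the fifth and sixth are `f [Xⱼ, ∇Xⱼ] = 0`. When `X₁`
is diagonal, `∇` preserves the strictly upper and the strictly lower triangular fields, acting on
their entry as `∂ₓ ∓ (f₁ - f₇)`, and it acts on diagonal fields as `∂ₓ`. So the fifth and sixth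
constraints are void on the ansatz, and every other one is a scalar equation times a fixed matrix
(two scalar equations for the first). The last two acquire factors `p₁` and `p₂`, which never
vanish together.
-/

section MatrixLiterals

variable {R : Type*}

lemma smul_matrix_fin_two [Mul R] (k a b c d : R) :
    k • !![a, b; c, d] = !![k * a, k * b; k * c, k * d] := by
  simp

lemma add_matrix_fin_two [Add R] (a b c d a' b' c' d' : R) :
    !![a, b; c, d] + !![a', b'; c', d'] = !![a + a', b + b'; c + c', d + d'] := by
  simp

lemma sub_matrix_fin_two [Sub R] (a b c d a' b' c' d' : R) :
    !![a, b; c, d] - !![a', b'; c', d'] = !![a - a', b - b'; c - c', d - d'] := by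
  simp

lemma diag_eq_zero_iff [Zero R] {a d : R} : !![a, 0; 0, d] = 0 ↔ a = 0 ∧ d = 0 := by
  simp [← Matrix.ext_iff, Fin.forall_fin_two]

lemma upper_eq_zero_iff [Zero R] {b : R} : !![0, b; 0, 0] = 0 ↔ b = 0 := by
  simp [← Matrix.ext_iff, Fin.forall_fin_two]

lemma lower_eq_zero_iff [Zero R] {c : R} : !![0, 0; c, 0] = 0 ↔ c = 0 := by
  simp [← Matrix.ext_iff, Fin.forall_fin_two]

end MatrixLiterals

section PartialDerivatives

variable {E : Type*} [NormedAddCommGroup E] [NormedSpace ℝ E] {p : ℝ × ℝ}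

lemma Dx_sub {F G : ℝ × ℝ → E} (hF : DifferentiableAt ℝ F p) (hG : DifferentiableAt ℝ G p) :
    Dx (fun q => F q - G q) p = Dx F p - Dx G p := by
  simp [Dx, fderiv_fun_sub hF hG]

lemma Dx_smul [NormedSpace ℂ E] [IsScalarTower ℝ ℂ E] {f : ℝ × ℝ → ℂ} {F : ℝ × ℝ → E}
    (hf : DifferentiableAt ℝ f p) (hF : DifferentiableAt ℝ F p) :
    Dx (fun q => f q • F q) p = f p • Dx F p + Dx f p • F p := by
  simp [Dx, fderiv_fun_smul hf hF]

lemma Dx_const_mul {u : ℝ × ℝ → ℂ} (hu : Differentiable ℝ u) (k : ℂ) :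
    Dx (fun q => k * u q) = fun q => k * Dx u q := by
  funext q
  simp [Dx, fderiv_const_mul (hu q)]

lemma Dt_const_mul {u : ℝ × ℝ → ℂ} (hu : Differentiable ℝ u) (k : ℂ) :
    Dt (fun q => k * u q) = fun q => k * Dt u q := by
  funext q
  simp [Dt, fderiv_const_mul (hu q)]

lemma differentiable_Dx {F : ℝ × ℝ → E} (hF : ContDiff ℝ 2 F) : Differentiable ℝ (Dx F) :=
  ((hF.fderiv_right (m := 1) (by norm_num)).clm_apply contDiff_const).differentiable one_ne_zero

end PartialDerivatives

section MatrixValued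

variable {V E : Type*} [NormedAddCommGroup V] [NormedSpace ℝ V] [NormedAddCommGroup E]
  [NormedSpace ℝ E]

lemma fderiv_matrix_apply {m n : Type*} [Finite m] [Finite n] {F : V → Matrix m n E}
    {p : V} (hF : DifferentiableAt ℝ F p) (w : V) (i : m) (j : n) :
    fderiv ℝ F p w i j = fderiv ℝ (fun q => F q i j) p w := by
  cases nonempty_fintype m
  cases nonempty_fintype n
  have hrow : fderiv ℝ F p w i = fderiv ℝ (fun q => F q i) p w :=
    (DFunLike.congr_fun (fderiv_apply hF i) w).symm
  have hentry : fderiv ℝ (fun q => F q i) p w j = fderiv ℝ (fun q => F q i j) p w :=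
    (DFunLike.congr_fun (fderiv_apply (differentiableAt_pi.1 hF i) j) w).symm
  rw [hrow, hentry]

variable {a b c d : V → E} {p : V}

lemma contDiff_matrix_fin_two {n : WithTop ℕ∞} (ha : ContDiff ℝ n a) (hb : ContDiff ℝ n b)
    (hc : ContDiff ℝ n c) (hd : ContDiff ℝ n d) :
    ContDiff ℝ n fun q => !![a q, b q; c q, d q] := by
  refine contDiff_pi.2 fun i => contDiff_pi.2 fun j => ?_
  fin_cases i <;> fin_cases j <;> assumption

lemma differentiableAt_matrix_fin_two (ha : DifferentiableAt ℝ a p) (hb : DifferentiableAt ℝ b p)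
    (hc : DifferentiableAt ℝ c p) (hd : DifferentiableAt ℝ d p) :
    DifferentiableAt ℝ (fun q => !![a q, b q; c q, d q]) p := by
  refine differentiableAt_pi.2 fun i => differentiableAt_pi.2 fun j => ?_
  fin_cases i <;> fin_cases j <;> assumption

lemma fderiv_matrix_fin_two (ha : DifferentiableAt ℝ a p) (hb : DifferentiableAt ℝ b p)
    (hc : DifferentiableAt ℝ c p) (hd : DifferentiableAt ℝ d p) (w : V) :
    fderiv ℝ (fun q => !![a q, b q; c q, d q]) p w =
      !![fderiv ℝ a p w, fderiv ℝ b p w; fderiv ℝ c p w, fderiv ℝ d p w] := by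
  ext i j
  rw [fderiv_matrix_apply (differentiableAt_matrix_fin_two ha hb hc hd)]
  fin_cases i <;> fin_cases j <;> rfl

lemma fderiv_diag (ha : DifferentiableAt ℝ a p) (hd : DifferentiableAt ℝ d p) (w : V) :
    fderiv ℝ (fun q => !![a q, 0; 0, d q]) p w = !![fderiv ℝ a p w, 0; 0, fderiv ℝ d p w] := by
  have h0 : DifferentiableAt ℝ (fun _ => (0 : E)) p := differentiableAt_const 0
  simpa using fderiv_matrix_fin_two ha h0 h0 hd w

lemma fderiv_upper (hb : DifferentiableAt ℝ b p) (w : V) :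
    fderiv ℝ (fun q => !![0, b q; 0, 0]) p w = !![0, fderiv ℝ b p w; 0, 0] := by
  have h0 : DifferentiableAt ℝ (fun _ => (0 : E)) p := differentiableAt_const 0
  simpa using fderiv_matrix_fin_two h0 hb h0 h0 w

lemma fderiv_lower (hc : DifferentiableAt ℝ c p) (w : V) :
    fderiv ℝ (fun q => !![0, 0; c q, 0]) p w = !![0, 0; fderiv ℝ c p w, 0] := by
  have h0 : DifferentiableAt ℝ (fun _ => (0 : E)) p := differentiableAt_const 0
  simpa using fderiv_matrix_fin_two h0 h0 hc h0 w

variable {a b c d : ℝ × ℝ → E} {p : ℝ × ℝ}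

lemma Dx_diag (ha : DifferentiableAt ℝ a p) (hd : DifferentiableAt ℝ d p) :
    Dx (fun q => !![a q, 0; 0, d q]) p = !![Dx a p, 0; 0, Dx d p] :=
  fderiv_diag ha hd _

lemma Dt_diag (ha : DifferentiableAt ℝ a p) (hd : DifferentiableAt ℝ d p) :
    Dt (fun q => !![a q, 0; 0, d q]) p = !![Dt a p, 0; 0, Dt d p] :=
  fderiv_diag ha hd _

lemma Dx_upper (hb : DifferentiableAt ℝ b p) :
    Dx (fun q => !![0, b q; 0, 0]) p = !![0, Dx b p; 0, 0] :=
  fderiv_upper hb _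

lemma Dt_upper (hb : DifferentiableAt ℝ b p) :
    Dt (fun q => !![0, b q; 0, 0]) p = !![0, Dt b p; 0, 0] :=
  fderiv_upper hb _

lemma Dx_lower (hc : DifferentiableAt ℝ c p) :
    Dx (fun q => !![0, 0; c q, 0]) p = !![0, 0; Dx c p, 0] :=
  fderiv_lower hc _

lemma Dt_lower (hc : DifferentiableAt ℝ c p) :
    Dt (fun q => !![0, 0; c q, 0]) p = !![0, 0; Dt c p, 0] :=
  fderiv_lower hc _

end MatrixValued

section Commutator

lemma matComm_add (A B C : Matrix (Fin 2) (Fin 2) ℂ) :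
    matComm A (B + C) = matComm A B + matComm A C := by
  simp only [matComm, mul_add, add_mul, add_sub_add_comm]

lemma matComm_sub (A B C : Matrix (Fin 2) (Fin 2) ℂ) :
    matComm A (B - C) = matComm A B - matComm A C := by
  simp only [matComm, mul_sub, sub_mul, sub_sub_sub_comm]

lemma matComm_smul (k : ℂ) (A B : Matrix (Fin 2) (Fin 2) ℂ) :
    matComm A (k • B) = k • matComm A B := by
  simp only [matComm, mul_smul_comm, smul_mul_assoc, smul_sub]

lemma matComm_jacobi (A B C : Matrix (Fin 2) (Fin 2) ℂ) :
    matComm A (matComm B C) = matComm B (matComm A C) - matComm C (matComm A B) := by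
  simp only [matComm]
  noncomm_ring

lemma matComm_diag_diag (a d a' d' : ℂ) : matComm !![a, 0; 0, d] !![a', 0; 0, d'] = 0 := by
  simp [matComm, mul_comm]

lemma matComm_diag_upper (a d b : ℂ) :
    matComm !![a, 0; 0, d] !![0, b; 0, 0] = !![0, (a - d) * b; 0, 0] := by
  simp [matComm, sub_mul, mul_comm b]

lemma matComm_diag_lower (a d c : ℂ) :
    matComm !![a, 0; 0, d] !![0, 0; c, 0] = !![0, 0; (d - a) * c, 0] := by
  ext i j
  fin_cases i <;> fin_cases j <;> simp [matComm, sub_mul, mul_comm c]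

lemma matComm_upper_diag (a d b : ℂ) :
    matComm !![0, b; 0, 0] !![a, 0; 0, d] = !![0, (d - a) * b; 0, 0] := by
  simp [matComm, sub_mul, mul_comm b]

lemma matComm_lower_diag (a d c : ℂ) :
    matComm !![0, 0; c, 0] !![a, 0; 0, d] = !![0, 0; (a - d) * c, 0] := by
  ext i j
  fin_cases i <;> fin_cases j <;> simp [matComm, sub_mul, mul_comm c]

lemma matComm_upper_upper (b b' : ℂ) : matComm !![0, b; 0, 0] !![0, b'; 0, 0] = 0 := by
  simp [matComm]

lemma matComm_lower_lower (c c' : ℂ) : matComm !![0, 0; c, 0] !![0, 0; c', 0] = 0 := by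
  simp [matComm]

lemma matComm_upper_lower (b c : ℂ) :
    matComm !![0, b; 0, 0] !![0, 0; c, 0] = !![b * c, 0; 0, -(b * c)] := by
  simp [matComm, mul_comm]

lemma differentiable_matComm {V : Type*} [NormedAddCommGroup V] [NormedSpace ℝ V]
    {A B : V → Matrix (Fin 2) (Fin 2) ℂ} (hA : Differentiable ℝ A)
    (hB : Differentiable ℝ B) : Differentiable ℝ fun p => matComm (A p) (B p) := by
  have hA' i j : Differentiable ℝ fun p => A p i j :=
    differentiable_pi.1 (differentiable_pi.1 hA i) j
  have hB' i j : Differentiable ℝ fun p => B p i j :=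
    differentiable_pi.1 (differentiable_pi.1 hB i) j
  refine differentiable_pi.2 fun i => differentiable_pi.2 fun j => ?_
  simp only [matComm, Matrix.sub_apply, Matrix.mul_apply]
  fun_prop

end Commutator

section CovariantDerivative

/-- The covariant `x`-derivative `∂ₓX - [A, X]` of a matrix field `X` along the connection matrix
`A`, in terms of which the matrix constraints take their compact form. -/
noncomputable def covDx (A X : ℝ × ℝ → Matrix (Fin 2) (Fin 2) ℂ) :
    ℝ × ℝ → Matrix (Fin 2) (Fin 2) ℂ :=
  fun p => Dx X p - matComm (A p) (X p)

variable {A X Y : ℝ × ℝ → Matrix (Fin 2) (Fin 2) ℂ} {f : ℝ × ℝ → ℂ}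

lemma covDx_covDx_smul (hf : ContDiff ℝ 2 f) (hA : Differentiable ℝ A) (hX : ContDiff ℝ 2 X)
    (p : ℝ × ℝ) :
    covDx A (covDx A fun q => f q • X q) p =
      Dx (Dx fun q => f q • X q) p - Dx (fun q => f q • matComm (A q) (X q)) p
        - Dx f p • matComm (A p) (X p) - f p • matComm (A p) (Dx X p)
        + f p • matComm (A p) (matComm (A p) (X p)) := by
  have hf' : Differentiable ℝ f := hf.differentiable two_ne_zero
  have hX' : Differentiable ℝ X := hX.differentiable two_ne_zero
  have hcovDx : (covDx A fun q => f q • X q) =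
      fun q => Dx (fun q => f q • X q) q - f q • matComm (A q) (X q) := by
    funext q
    simp only [covDx, matComm_smul]
  rw [hcovDx, covDx, Dx_sub (differentiable_Dx (hf.fun_smul hX) p)
    ((hf'.fun_smul (differentiable_matComm hA hX')) p), Dx_smul (hf' p) (hX' p)]
  simp only [matComm_sub, matComm_add, matComm_smul]
  abel

lemma covDx_smul_matComm (p : ℝ × ℝ) :
    covDx A (fun q => f q • matComm (X q) (Y q)) p =
      Dx (fun q => f q • matComm (X q) (Y q)) p - f p • matComm (X p) (matComm (A p) (Y p))
        + f p • matComm (Y p) (matComm (A p) (X p)) := by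
  rw [covDx, matComm_smul, matComm_jacobi, smul_sub]
  abel

end CovariantDerivative

section RootSpaces

variable {a d u : ℝ × ℝ → ℂ}

lemma covDx_diag_upper (hu : Differentiable ℝ u) :
    (covDx (fun q => !![a q, 0; 0, d q]) fun q => !![0, u q; 0, 0]) =
      fun q => !![0, Dx u q - (a q - d q) * u q; 0, 0] := by
  funext q
  simp only [covDx, Dx_upper (hu q), matComm_diag_upper, sub_matrix_fin_two, sub_zero]

lemma covDx_diag_lower (hu : Differentiable ℝ u) :
    (covDx (fun q => !![a q, 0; 0, d q]) fun q => !![0, 0; u q, 0]) =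
      fun q => !![0, 0; Dx u q - (d q - a q) * u q, 0] := by
  funext q
  simp only [covDx, Dx_lower (hu q), matComm_diag_lower, sub_matrix_fin_two, sub_zero]

lemma covDx_diag_diag {b c : ℝ × ℝ → ℂ} (hb : Differentiable ℝ b) (hc : Differentiable ℝ c) :
    (covDx (fun q => !![a q, 0; 0, d q]) fun q => !![b q, 0; 0, c q]) =
      fun q => !![Dx b q, 0; 0, Dx c q] := by
  funext q
  rw [covDx, Dx_diag (hb q) (hc q), matComm_diag_diag, sub_zero]

lemma Dx_sub_mul_twice {δ : ℝ × ℝ → ℂ} (hδ : Differentiable ℝ δ) (hu : ContDiff ℝ 2 u)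
    (p : ℝ × ℝ) :
    Dx (fun q => Dx u q - δ q * u q) p - δ p * (Dx u p - δ p * u p) =
      Dx (Dx u) p - 2 * δ p * Dx u p + (δ p ^ 2 - Dx δ p) * u p := by
  have hu' : Differentiable ℝ u := hu.differentiable two_ne_zero
  have hmul : Dx (fun q => δ q * u q) p = δ p * Dx u p + Dx δ p * u p := Dx_smul (hδ p) (hu' p)
  rw [Dx_sub (differentiable_Dx hu p) ((hδ.fun_mul hu') p), hmul]
  ring

lemma covDx_covDx_diag_upper (ha : Differentiable ℝ a) (hd : Differentiable ℝ d)
    (hu : ContDiff ℝ 2 u) (p : ℝ × ℝ) :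
    covDx (fun q => !![a q, 0; 0, d q])
        (covDx (fun q => !![a q, 0; 0, d q]) fun q => !![0, u q; 0, 0]) p =
      !![0, Dx (Dx u) p - 2 * (a p - d p) * Dx u p
        + ((a p - d p) ^ 2 - Dx (fun q => a q - d q) p) * u p; 0, 0] := by
  have hu' : Differentiable ℝ u := hu.differentiable two_ne_zero
  have hδ : Differentiable ℝ fun q => a q - d q := ha.fun_sub hd
  rw [covDx_diag_upper hu', covDx_diag_upper ((differentiable_Dx hu).fun_sub (hδ.fun_mul hu')),
    ← Dx_sub_mul_twice hδ hu]

lemma covDx_covDx_diag_lower (ha : Differentiable ℝ a) (hd : Differentiable ℝ d)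
    (hu : ContDiff ℝ 2 u) (p : ℝ × ℝ) :
    covDx (fun q => !![a q, 0; 0, d q])
        (covDx (fun q => !![a q, 0; 0, d q]) fun q => !![0, 0; u q, 0]) p =
      !![0, 0; Dx (Dx u) p - 2 * (d p - a p) * Dx u p
        + ((d p - a p) ^ 2 - Dx (fun q => d q - a q) p) * u p, 0] := by
  have hu' : Differentiable ℝ u := hu.differentiable two_ne_zero
  have hδ : Differentiable ℝ fun q => d q - a q := hd.fun_sub ha
  rw [covDx_diag_lower hu', covDx_diag_lower ((differentiable_Dx hu).fun_sub (hδ.fun_mul hu')),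
    ← Dx_sub_mul_twice hδ hu]

end RootSpaces

section ConstraintSystems

/-- The eight matrix constraints of the extended Estabrook-Wahlquist method for the
variable-coefficient NLS system, for arbitrary matrix fields `X₀, X₁, X₂, X₃`. -/
def MatrixConstraints (f g v γ : ℝ × ℝ → ℂ)
    (X₀ X₁ X₂ X₃ : ℝ × ℝ → Matrix (Fin 2) (Fin 2) ℂ) : Prop :=
  (∀ p : ℝ × ℝ, Dt X₁ p - Dx X₀ p + matComm (X₁ p) (X₀ p) = 0)
    ∧ (∀ p : ℝ × ℝ,
        Dt X₂ p + (I * (v p + I * γ p)) • X₂ p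
          + I • Dx (Dx (fun p' => f p' • X₂ p')) p
          - I • Dx (fun p' => f p' • matComm (X₁ p') (X₂ p')) p
          - (I * Dx f p) • matComm (X₁ p) (X₂ p)
          - (I * f p) • matComm (X₁ p) (Dx X₂ p)
          + (I * f p) • matComm (X₁ p) (matComm (X₁ p) (X₂ p))
          + matComm (X₂ p) (X₀ p) = 0)
    ∧ (∀ p : ℝ × ℝ,
        Dt X₃ p - (I * (v p - I * γ p)) • X₃ p
          - I • Dx (Dx (fun p' => f p' • X₃ p')) p
          + I • Dx (fun p' => f p' • matComm (X₁ p') (X₃ p')) p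
          + (I * Dx f p) • matComm (X₁ p) (X₃ p)
          + (I * f p) • matComm (X₁ p) (Dx X₃ p)
          - (I * f p) • matComm (X₁ p) (matComm (X₁ p) (X₃ p))
          + matComm (X₃ p) (X₀ p) = 0)
    ∧ (∀ p : ℝ × ℝ,
        (2 * I) • Dx (fun p' => f p' • matComm (X₂ p') (X₃ p')) p
          - (I * f p) • matComm (X₁ p) (matComm (X₂ p) (X₃ p))
          + (I * Dx f p) • matComm (X₂ p) (X₃ p)
          - (I * f p) • matComm (X₂ p) (matComm (X₁ p) (X₃ p))
          + (I * f p) • matComm (X₃ p) (matComm (X₁ p) (X₂ p)) = 0)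
    ∧ (∀ p : ℝ × ℝ,
        f p • (matComm (X₂ p) (Dx X₂ p)
          - matComm (X₂ p) (matComm (X₁ p) (X₂ p))) = 0)
    ∧ (∀ p : ℝ × ℝ,
        f p • (matComm (X₃ p) (Dx X₃ p)
          - matComm (X₃ p) (matComm (X₁ p) (X₃ p))) = 0)
    ∧ (∀ p : ℝ × ℝ,
        g p • X₂ p - f p • matComm (X₂ p) (matComm (X₂ p) (X₃ p)) = 0)
    ∧ (∀ p : ℝ × ℝ,
        g p • X₃ p + f p • matComm (X₃ p) (matComm (X₂ p) (X₃ p)) = 0)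

/-- The six scalar determining equations (KC1)-(KC6) for the entries of the matrix ansatz. -/
def ScalarConstraints (f g v γ f₁ f₇ g₁ g₁₃ p₁ p₂ : ℝ × ℝ → ℂ) : Prop :=
  ∀ p : ℝ × ℝ,
    (Dt f₁ p - Dx g₁ p = 0)
    ∧ (Dt f₇ p - Dx g₁₃ p = 0)
    ∧ (I * Dt p₁ p - I * p₁ p * (g₁ p - g₁₃ p - I * v p + γ p)
        - Dx (Dx (fun p' => f p' * p₁ p')) p
        + 2 * (f₁ p - f₇ p) * Dx (fun p' => p₁ p' * f p') p
        - f p * p₁ p * (f₁ p - f₇ p) ^ 2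
        + f p * p₁ p * Dx (fun p' => f₁ p' - f₇ p') p = 0)
    ∧ (I * Dt p₂ p + I * p₂ p * (g₁ p - g₁₃ p - I * v p - γ p)
        + Dx (Dx (fun p' => f p' * p₂ p')) p
        + 2 * (f₁ p - f₇ p) * Dx (fun p' => f p' * p₂ p') p
        + (f₁ p - f₇ p) ^ 2 * f p * p₂ p
        + f p * p₂ p * Dx (fun p' => f₁ p' - f₇ p') p = 0)
    ∧ (Dx f p * p₁ p * p₂ p + 2 * Dx (fun p' => f p' * p₁ p' * p₂ p') p = 0)
    ∧ (g p + 2 * f p * p₁ p * p₂ p = 0)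

theorem matrixConstraints_iff_covDx {f g v γ : ℝ × ℝ → ℂ}
    {X₀ X₁ X₂ X₃ : ℝ × ℝ → Matrix (Fin 2) (Fin 2) ℂ} (hf : ContDiff ℝ 2 f)
    (hX₁ : Differentiable ℝ X₁) (hX₂ : ContDiff ℝ 2 X₂) (hX₃ : ContDiff ℝ 2 X₃) :
    MatrixConstraints f g v γ X₀ X₁ X₂ X₃ ↔
      (∀ p, Dt X₁ p - Dx X₀ p + matComm (X₁ p) (X₀ p) = 0)
      ∧ (∀ p, Dt X₂ p + (I * (v p + I * γ p)) • X₂ p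
          + I • covDx X₁ (covDx X₁ fun q => f q • X₂ q) p + matComm (X₂ p) (X₀ p) = 0)
      ∧ (∀ p, Dt X₃ p - (I * (v p - I * γ p)) • X₃ p
          - I • covDx X₁ (covDx X₁ fun q => f q • X₃ q) p + matComm (X₃ p) (X₀ p) = 0)
      ∧ (∀ p, (2 * I) • covDx X₁ (fun q => f q • matComm (X₂ q) (X₃ q)) p
          + (I * Dx f p) • matComm (X₂ p) (X₃ p) = 0)
      ∧ (∀ p, f p • matComm (X₂ p) (covDx X₁ X₂ p) = 0)
      ∧ (∀ p, f p • matComm (X₃ p) (covDx X₁ X₃ p) = 0)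
      ∧ (∀ p, g p • X₂ p - f p • matComm (X₂ p) (matComm (X₂ p) (X₃ p)) = 0)
      ∧ (∀ p, g p • X₃ p + f p • matComm (X₃ p) (matComm (X₂ p) (X₃ p)) = 0) := by
  refine and_congr Iff.rfl <| and_congr (forall_congr' fun p => ?_) <|
    and_congr (forall_congr' fun p => ?_) <| and_congr (forall_congr' fun p => ?_) <|
    and_congr (forall_congr' fun p => ?_) <| and_congr (forall_congr' fun p => ?_) Iff.rfl
  · rw [covDx_covDx_smul hf hX₁ hX₂]
    refine Eq.congr ?_ rfl
    module
  · rw [covDx_covDx_smul hf hX₁ hX₃]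
    refine Eq.congr ?_ rfl
    module
  · rw [covDx_smul_matComm, matComm_jacobi (X₁ p)]
    refine Eq.congr ?_ rfl
    module
  · rw [covDx, matComm_sub]
  · rw [covDx, matComm_sub]

end ConstraintSystems

section Ansatz

variable {f g v γ f₁ f₇ g₁ g₁₃ p₁ p₂ : ℝ × ℝ → ℂ} {p : ℝ × ℝ}

lemma curvature_diag_eq_zero_iff (hf₁ : DifferentiableAt ℝ f₁ p) (hf₇ : DifferentiableAt ℝ f₇ p)
    (hg₁ : DifferentiableAt ℝ g₁ p) (hg₁₃ : DifferentiableAt ℝ g₁₃ p) :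
    Dt (fun q => !![f₁ q, 0; 0, f₇ q]) p - Dx (fun q => !![g₁ q, 0; 0, g₁₃ q]) p
        + matComm !![f₁ p, 0; 0, f₇ p] !![g₁ p, 0; 0, g₁₃ p] = 0 ↔
      Dt f₁ p - Dx g₁ p = 0 ∧ Dt f₇ p - Dx g₁₃ p = 0 := by
  rw [Dt_diag hf₁ hf₇, Dx_diag hg₁ hg₁₃, matComm_diag_diag,
    sub_matrix_fin_two, sub_zero, add_zero, diag_eq_zero_iff]

lemma evolution_upper_eq_zero_iff (hf : ContDiff ℝ 2 f) (hf₁ : Differentiable ℝ f₁)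
    (hf₇ : Differentiable ℝ f₇) (hp₁ : ContDiff ℝ 2 p₁) :
    Dt (fun q => !![0, I * p₁ q; 0, 0]) p + (I * (v p + I * γ p)) • !![0, I * p₁ p; 0, 0]
        + I • covDx (fun q => !![f₁ q, 0; 0, f₇ q]) (covDx (fun q => !![f₁ q, 0; 0, f₇ q])
          fun q => f q • !![0, I * p₁ q; 0, 0]) p
        + matComm !![0, I * p₁ p; 0, 0] !![g₁ p, 0; 0, g₁₃ p] = 0 ↔
      I * Dt p₁ p - I * p₁ p * (g₁ p - g₁₃ p - I * v p + γ p)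
        - Dx (Dx (fun q => f q * p₁ q)) p + 2 * (f₁ p - f₇ p) * Dx (fun q => p₁ q * f q) p
        - f p * p₁ p * (f₁ p - f₇ p) ^ 2 + f p * p₁ p * Dx (fun q => f₁ q - f₇ q) p = 0 := by
  have hp₁' : Differentiable ℝ p₁ := hp₁.differentiable two_ne_zero
  have hfp₁ : ContDiff ℝ 2 fun q => f q * p₁ q := hf.mul hp₁
  have hfX₂ : (fun q => f q • !![0, I * p₁ q; 0, 0]) = fun q => !![0, I * (f q * p₁ q); 0, 0] := by
    simp only [smul_matrix_fin_two, mul_zero, mul_left_comm]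
  rw [hfX₂, covDx_covDx_diag_upper hf₁ hf₇ (contDiff_const.mul hfp₁),
    Dx_const_mul (hfp₁.differentiable two_ne_zero), Dx_const_mul (differentiable_Dx hfp₁),
    Dt_upper (hp₁'.const_mul I p), Dt_const_mul hp₁', matComm_upper_diag]
  simp only [smul_matrix_fin_two, add_matrix_fin_two, mul_zero, add_zero, upper_eq_zero_iff,
    mul_comm (p₁ _) (f _)]
  refine Eq.congr ?_ rfl
  linear_combination (I * γ p * p₁ p + Dx (Dx fun q => f q * p₁ q) p
    - 2 * (f₁ p - f₇ p) * Dx (fun q => f q * p₁ q) p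
    + ((f₁ p - f₇ p) ^ 2 - Dx (fun q => f₁ q - f₇ q) p) * (f p * p₁ p)) * I_sq

lemma evolution_lower_eq_zero_iff (hf : ContDiff ℝ 2 f) (hf₁ : Differentiable ℝ f₁)
    (hf₇ : Differentiable ℝ f₇) (hp₂ : ContDiff ℝ 2 p₂) :
    Dt (fun q => !![0, 0; -I * p₂ q, 0]) p - (I * (v p - I * γ p)) • !![0, 0; -I * p₂ p, 0]
        - I • covDx (fun q => !![f₁ q, 0; 0, f₇ q]) (covDx (fun q => !![f₁ q, 0; 0, f₇ q])
          fun q => f q • !![0, 0; -I * p₂ q, 0]) p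
        + matComm !![0, 0; -I * p₂ p, 0] !![g₁ p, 0; 0, g₁₃ p] = 0 ↔
      I * Dt p₂ p + I * p₂ p * (g₁ p - g₁₃ p - I * v p - γ p)
        + Dx (Dx (fun q => f q * p₂ q)) p + 2 * (f₁ p - f₇ p) * Dx (fun q => f q * p₂ q) p
        + (f₁ p - f₇ p) ^ 2 * f p * p₂ p + f p * p₂ p * Dx (fun q => f₁ q - f₇ q) p = 0 := by
  have hp₂' : Differentiable ℝ p₂ := hp₂.differentiable two_ne_zero
  have hfp₂ : ContDiff ℝ 2 fun q => f q * p₂ q := hf.mul hp₂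
  have hfX₃ : (fun q => f q • !![0, 0; -I * p₂ q, 0]) =
      fun q => !![0, 0; -I * (f q * p₂ q), 0] := by
    simp only [smul_matrix_fin_two, mul_zero, mul_left_comm]
  rw [hfX₃, covDx_covDx_diag_lower hf₁ hf₇ (contDiff_const.mul hfp₂),
    Dx_const_mul (hfp₂.differentiable two_ne_zero), Dx_const_mul (differentiable_Dx hfp₂),
    Dt_lower (hp₂'.const_mul (-I) p), Dt_const_mul hp₂', matComm_lower_diag,
    Dx_sub (hf₁ p) (hf₇ p), Dx_sub (hf₇ p) (hf₁ p)]
  simp only [smul_matrix_fin_two, add_matrix_fin_two, sub_matrix_fin_two, mul_zero, add_zero,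
    sub_zero, lower_eq_zero_iff]
  rw [← neg_eq_zero]
  refine Eq.congr ?_ rfl
  linear_combination (I * γ p * p₂ p - Dx (Dx fun q => f q * p₂ q) p
    - 2 * (f₁ p - f₇ p) * Dx (fun q => f q * p₂ q) p
    - ((f₁ p - f₇ p) ^ 2 + (Dx f₁ p - Dx f₇ p)) * (f p * p₂ p)) * I_sq

lemma matComm_I_mul_upper_neg_I_mul_lower (b c : ℂ) :
    matComm !![0, I * b; 0, 0] !![0, 0; -I * c, 0] = !![b * c, 0; 0, -(b * c)] := by
  have h : I * b * (-I * c) = b * c := by linear_combination -(b * c) * I_sq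
  rw [matComm_upper_lower, h]

lemma quadratic_constraint_eq_zero_iff (hf : Differentiable ℝ f)
    (hp₁ : Differentiable ℝ p₁) (hp₂ : Differentiable ℝ p₂) :
    (2 * I) • covDx (fun q => !![f₁ q, 0; 0, f₇ q])
          (fun q => f q • matComm !![0, I * p₁ q; 0, 0] !![0, 0; -I * p₂ q, 0]) p
        + (I * Dx f p) • matComm !![0, I * p₁ p; 0, 0] !![0, 0; -I * p₂ p, 0] = 0 ↔
      Dx f p * p₁ p * p₂ p + 2 * Dx (fun q => f q * p₁ q * p₂ q) p = 0 := by
  have hdiag : (fun q => f q • matComm !![0, I * p₁ q; 0, 0] !![0, 0; -I * p₂ q, 0]) =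
      fun q => !![f q * p₁ q * p₂ q, 0; 0, -1 * (f q * p₁ q * p₂ q)] := by
    simp only [matComm_I_mul_upper_neg_I_mul_lower, smul_matrix_fin_two, mul_zero, mul_neg,
      neg_one_mul, mul_assoc]
  have hfp : Differentiable ℝ fun q => f q * p₁ q * p₂ q := (hf.fun_mul hp₁).fun_mul hp₂
  rw [hdiag, covDx_diag_diag hfp (hfp.const_mul (-1)), Dx_const_mul hfp,
    matComm_I_mul_upper_neg_I_mul_lower]
  have hfactor :
      (2 * I) • !![Dx (fun q => f q * p₁ q * p₂ q) p, 0;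
          0, -1 * Dx (fun q => f q * p₁ q * p₂ q) p]
        + (I * Dx f p) • !![p₁ p * p₂ p, 0; 0, -(p₁ p * p₂ p)] =
      (I * (Dx f p * p₁ p * p₂ p + 2 * Dx (fun q => f q * p₁ q * p₂ q) p)) • !![1, 0; 0, -1] := by
    simp only [smul_matrix_fin_two, add_matrix_fin_two, mul_zero, add_zero]
    ring_nf
  rw [hfactor, smul_eq_zero_iff_left (by simp [diag_eq_zero_iff]), mul_eq_zero,
    or_iff_right I_ne_zero]

lemma upper_cubic_eq_zero_iff (b c k l : ℂ) :
    k • !![0, I * b; 0, 0] - l • matComm !![0, I * b; 0, 0]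
      (matComm !![0, I * b; 0, 0] !![0, 0; -I * c, 0]) = 0 ↔ b = 0 ∨ k + 2 * l * b * c = 0 := by
  have hupper : k • !![0, I * b; 0, 0] - l • matComm !![0, I * b; 0, 0]
      (matComm !![0, I * b; 0, 0] !![0, 0; -I * c, 0]) =
      !![0, I * (b * (k + 2 * l * b * c)); 0, 0] := by
    rw [matComm_I_mul_upper_neg_I_mul_lower, matComm_upper_diag]
    simp only [smul_matrix_fin_two, sub_matrix_fin_two, mul_zero, sub_zero]
    ring_nf
  rw [hupper, upper_eq_zero_iff, mul_eq_zero, or_iff_right I_ne_zero, mul_eq_zero]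

lemma lower_cubic_eq_zero_iff (b c k l : ℂ) :
    k • !![0, 0; -I * c, 0] + l • matComm !![0, 0; -I * c, 0]
      (matComm !![0, I * b; 0, 0] !![0, 0; -I * c, 0]) = 0 ↔ c = 0 ∨ k + 2 * l * b * c = 0 := by
  have hlower : k • !![0, 0; -I * c, 0] + l • matComm !![0, 0; -I * c, 0]
      (matComm !![0, I * b; 0, 0] !![0, 0; -I * c, 0]) =
      !![0, 0; -I * (c * (k + 2 * l * b * c)), 0] := by
    rw [matComm_I_mul_upper_neg_I_mul_lower, matComm_lower_diag]
    simp only [smul_matrix_fin_two, add_matrix_fin_two, mul_zero, add_zero]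
    ring_nf
  rw [hlower, lower_eq_zero_iff, mul_eq_zero, or_iff_right (neg_ne_zero.2 I_ne_zero), mul_eq_zero]

theorem vcNLS_constraints_iff_scalar_general (f g v γ f₁ f₇ g₁ g₁₃ p₁ p₂ : ℝ × ℝ → ℂ)
    (hf : ContDiff ℝ 2 f)
    (hf₁ : Differentiable ℝ f₁) (hf₇ : Differentiable ℝ f₇)
    (hg₁ : Differentiable ℝ g₁) (hg₁₃ : Differentiable ℝ g₁₃)
    (hp₁ : ContDiff ℝ 2 p₁) (hp₂ : ContDiff ℝ 2 p₂) (hne : ∀ p, p₁ p ≠ 0 ∨ p₂ p ≠ 0) :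
    MatrixConstraints f g v γ (fun p => !![g₁ p, 0; 0, g₁₃ p]) (fun p => !![f₁ p, 0; 0, f₇ p])
        (fun p => !![0, I * p₁ p; 0, 0]) (fun p => !![0, 0; -I * p₂ p, 0]) ↔
      ScalarConstraints f g v γ f₁ f₇ g₁ g₁₃ p₁ p₂ := by
  have hX₁ : Differentiable ℝ fun p => !![f₁ p, 0; 0, f₇ p] := fun p =>
    differentiableAt_matrix_fin_two (hf₁ p) (differentiableAt_const 0) (differentiableAt_const 0)
      (hf₇ p)
  have hX₂ : ContDiff ℝ 2 fun p => !![0, I * p₁ p; 0, 0] :=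
    contDiff_matrix_fin_two contDiff_const (contDiff_const.mul hp₁) contDiff_const contDiff_const
  have hX₃ : ContDiff ℝ 2 fun p => !![0, 0; -I * p₂ p, 0] :=
    contDiff_matrix_fin_two contDiff_const contDiff_const (contDiff_const.mul hp₂) contDiff_const
  have hp₁' : Differentiable ℝ p₁ := hp₁.differentiable two_ne_zero
  have hp₂' : Differentiable ℝ p₂ := hp₂.differentiable two_ne_zero
  simp only [matrixConstraints_iff_covDx hf hX₁ hX₂ hX₃, ScalarConstraints, ← forall_and]
  refine forall_congr' fun p => ?_
  rw [curvature_diag_eq_zero_iff (hf₁ p) (hf₇ p) (hg₁ p) (hg₁₃ p),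
    evolution_upper_eq_zero_iff hf hf₁ hf₇ hp₁, evolution_lower_eq_zero_iff hf hf₁ hf₇ hp₂,
    quadratic_constraint_eq_zero_iff (hf.differentiable two_ne_zero) hp₁' hp₂',
    covDx_diag_upper (hp₁'.const_mul I), covDx_diag_lower (hp₂'.const_mul (-I)),
    matComm_upper_upper, matComm_lower_lower, upper_cubic_eq_zero_iff, lower_cubic_eq_zero_iff]
  have hcubic : ((p₁ p = 0 ∨ g p + 2 * f p * p₁ p * p₂ p = 0)
      ∧ (p₂ p = 0 ∨ g p + 2 * f p * p₁ p * p₂ p = 0)) ↔ g p + 2 * f p * p₁ p * p₂ p = 0 := by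
    rw [← and_or_right, or_iff_right (not_and_or.2 (hne p))]
  simp only [hcubic, smul_zero, true_and, and_assoc]

end Ansatz

/-- On Khawaja's matrix ansatz, the eight matrix constraints of the extended
Estabrook-Wahlquist method for the vcNLS equation hold at every point iff the six
scalar determining equations (KC1)-(KC6) hold at every point. -/
theorem vcNLS_constraints_iff_scalar (f g v γ f₁ f₇ g₁ g₁₃ p₁ p₂ : ℝ × ℝ → ℂ)
    (hf : ContDiff ℝ (⊤ : ℕ∞) f) (hg : ContDiff ℝ (⊤ : ℕ∞) g) (hv : ContDiff ℝ (⊤ : ℕ∞) v)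
    (hγ : ContDiff ℝ (⊤ : ℕ∞) γ) (hf₁ : ContDiff ℝ (⊤ : ℕ∞) f₁) (hf₇ : ContDiff ℝ (⊤ : ℕ∞) f₇)
    (hg₁ : ContDiff ℝ (⊤ : ℕ∞) g₁) (hg₁₃ : ContDiff ℝ (⊤ : ℕ∞) g₁₃)
    (hp₁ : ContDiff ℝ (⊤ : ℕ∞) p₁) (hp₂ : ContDiff ℝ (⊤ : ℕ∞) p₂)
    (hp₁ne : ∀ p : ℝ × ℝ, p₁ p ≠ 0) (hp₂ne : ∀ p : ℝ × ℝ, p₂ p ≠ 0)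
    (X₀ X₁ X₂ X₃ : ℝ × ℝ → Matrix (Fin 2) (Fin 2) ℂ)
    (hX₀ : X₀ = fun p => !![g₁ p, 0; 0, g₁₃ p])
    (hX₁ : X₁ = fun p => !![f₁ p, 0; 0, f₇ p])
    (hX₂ : X₂ = fun p => !![0, I * p₁ p; 0, 0])
    (hX₃ : X₃ = fun p => !![0, 0; -I * p₂ p, 0]) :
    ((∀ p : ℝ × ℝ, Dt X₁ p - Dx X₀ p + matComm (X₁ p) (X₀ p) = 0)
      ∧ (∀ p : ℝ × ℝ,
          Dt X₂ p + (I * (v p + I * γ p)) • X₂ p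
            + I • Dx (Dx (fun p' => f p' • X₂ p')) p
            - I • Dx (fun p' => f p' • matComm (X₁ p') (X₂ p')) p
            - (I * Dx f p) • matComm (X₁ p) (X₂ p)
            - (I * f p) • matComm (X₁ p) (Dx X₂ p)
            + (I * f p) • matComm (X₁ p) (matComm (X₁ p) (X₂ p))
            + matComm (X₂ p) (X₀ p) = 0)
      ∧ (∀ p : ℝ × ℝ,
          Dt X₃ p - (I * (v p - I * γ p)) • X₃ p
            - I • Dx (Dx (fun p' => f p' • X₃ p')) p
            + I • Dx (fun p' => f p' • matComm (X₁ p') (X₃ p')) p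
            + (I * Dx f p) • matComm (X₁ p) (X₃ p)
            + (I * f p) • matComm (X₁ p) (Dx X₃ p)
            - (I * f p) • matComm (X₁ p) (matComm (X₁ p) (X₃ p))
            + matComm (X₃ p) (X₀ p) = 0)
      ∧ (∀ p : ℝ × ℝ,
          (2 * I) • Dx (fun p' => f p' • matComm (X₂ p') (X₃ p')) p
            - (I * f p) • matComm (X₁ p) (matComm (X₂ p) (X₃ p))
            + (I * Dx f p) • matComm (X₂ p) (X₃ p)
            - (I * f p) • matComm (X₂ p) (matComm (X₁ p) (X₃ p))
            + (I * f p) • matComm (X₃ p) (matComm (X₁ p) (X₂ p)) = 0)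
      ∧ (∀ p : ℝ × ℝ,
          f p • (matComm (X₂ p) (Dx X₂ p)
            - matComm (X₂ p) (matComm (X₁ p) (X₂ p))) = 0)
      ∧ (∀ p : ℝ × ℝ,
          f p • (matComm (X₃ p) (Dx X₃ p)
            - matComm (X₃ p) (matComm (X₁ p) (X₃ p))) = 0)
      ∧ (∀ p : ℝ × ℝ,
          g p • X₂ p - f p • matComm (X₂ p) (matComm (X₂ p) (X₃ p)) = 0)
      ∧ (∀ p : ℝ × ℝ,
          g p • X₃ p + f p • matComm (X₃ p) (matComm (X₂ p) (X₃ p)) = 0))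
    ↔ (∀ p : ℝ × ℝ,
        (Dt f₁ p - Dx g₁ p = 0)
        ∧ (Dt f₇ p - Dx g₁₃ p = 0)
        ∧ (I * Dt p₁ p - I * p₁ p * (g₁ p - g₁₃ p - I * v p + γ p)
            - Dx (Dx (fun p' => f p' * p₁ p')) p
            + 2 * (f₁ p - f₇ p) * Dx (fun p' => p₁ p' * f p') p
            - f p * p₁ p * (f₁ p - f₇ p) ^ 2
            + f p * p₁ p * Dx (fun p' => f₁ p' - f₇ p') p = 0)
        ∧ (I * Dt p₂ p + I * p₂ p * (g₁ p - g₁₃ p - I * v p - γ p)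
            + Dx (Dx (fun p' => f p' * p₂ p')) p
            + 2 * (f₁ p - f₇ p) * Dx (fun p' => f p' * p₂ p') p
            + (f₁ p - f₇ p) ^ 2 * f p * p₂ p
            + f p * p₂ p * Dx (fun p' => f₁ p' - f₇ p') p = 0)
        ∧ (Dx f p * p₁ p * p₂ p + 2 * Dx (fun p' => f p' * p₁ p' * p₂ p') p = 0)
        ∧ (g p + 2 * f p * p₁ p * p₂ p = 0)) := by
  subst hX₀ hX₁ hX₂ hX₃
  exact vcNLS_constraints_iff_scalar_general f g v γ f₁ f₇ g₁ g₁₃ p₁ p₂ (contDiff_infty.1 hf 2)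
    (hf₁.differentiable (by simp)) (hf₇.differentiable (by simp)) (hg₁.differentiable (by simp))
    (hg₁₃.differentiable (by simp)) (contDiff_infty.1 hp₁ 2) (contDiff_infty.1 hp₂ 2)
    fun p => .inl (hp₁ne p)
end
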